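/- arXiv:2309.03872 — 5 statements merged into one kernel-verified Lean document; each statement's English description precedes it below -/
import Mathlib

section
/- (Mixing one-time pad, covering Lemmas 5–7 of the paper.) Let F be a finite field, let k ≤ m be positive integers, and let β_1, …, β_k ∈ F be pairwise distinct and nonzero. Let (Ω, ℙ) be a probability space, V : Ω → (Fin k → F) any random variable, and Z : Ω → (Fin m → F) uniformly distributed and independent of V. Define A : Ω → (Fin k → F) by A_j = V_j + Σ_{i=1}^m β_j^i Z_i. Then A is uniformly distributed on Fin k → F, and V and A are independent. -/
open MeasureTheory ProbabilityTheory

/-!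
The law of `V + f Z` given `V = v` is a translate of the law of `f Z`. If `f` is a surjective
homomorphism of finite groups and `Z` is uniform, then `f Z` is uniform, being translation
invariant, so this conditional law does not depend on `v`. The powers `β_j ^ i` give such an `f`:
the first `k` columns of their matrix are a diagonal matrix times a Vandermonde matrix, whose
determinant is a product of units.
-/

section UniformMeasure

variable {α G H : Type*}

lemma toMeasure_uniformOfFintype_eq_smul_count [Fintype α] [Nonempty α] [MeasurableSpace α]
    [MeasurableSingletonClass α] :
    (PMF.uniformOfFintype α).toMeasure = (Fintype.card α : ENNReal)⁻¹ • Measure.count :=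
  Measure.ext_of_singleton fun a ↦ by
    simp [PMF.toMeasure_apply_singleton _ a (measurableSet_singleton a)]

instance isAddLeftInvariant_toMeasure_uniformOfFintype [AddGroup G] [Fintype G]
    [MeasurableSpace G] [DiscreteMeasurableSpace G] :
    (PMF.uniformOfFintype G).toMeasure.IsAddLeftInvariant := by
  rw [toMeasure_uniformOfFintype_eq_smul_count]
  infer_instance

lemma eq_toMeasure_uniformOfFintype_of_isAddLeftInvariant [AddGroup G] [Fintype G]
    [MeasurableSpace G] [DiscreteMeasurableSpace G] (μ : Measure G) [IsProbabilityMeasure μ]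
    [μ.IsAddLeftInvariant] : μ = (PMF.uniformOfFintype G).toMeasure := by
  have singleton_eq (g : G) : μ {g} = μ {0} := by
    simpa using (measure_preimage_add μ g {g}).symm
  have card_mul : μ {0} * Fintype.card G = 1 := by
    calc μ {0} * Fintype.card G = ∑ g : G, μ {g} := by simp [singleton_eq, mul_comm]
      _ = 1 := by rw [sum_measure_singleton, Finset.coe_univ, measure_univ]
  refine Measure.ext_of_singleton fun g ↦ ?_
  rw [singleton_eq, ENNReal.eq_inv_of_mul_eq_one_left card_mul,
    PMF.toMeasure_apply_singleton _ g (measurableSet_singleton g), PMF.uniformOfFintype_apply]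

lemma map_toMeasure_uniformOfFintype_of_surjective
    [AddGroup G] [Fintype G] [MeasurableSpace G] [DiscreteMeasurableSpace G]
    [AddGroup H] [Fintype H] [MeasurableSpace H] [DiscreteMeasurableSpace H]
    (f : G →+ H) (hf : Function.Surjective f) :
    (PMF.uniformOfFintype G).toMeasure.map f = (PMF.uniformOfFintype H).toMeasure := by
  have hfm : Measurable f := .of_discrete
  have : IsProbabilityMeasure ((PMF.uniformOfFintype G).toMeasure.map f) :=
    Measure.isProbabilityMeasure_map hfm.aemeasurable
  have : ((PMF.uniformOfFintype G).toMeasure.map f).IsAddLeftInvariant :=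
    isAddLeftInvariant_map f.toAddHom hfm hf
  exact eq_toMeasure_uniformOfFintype_of_isAddLeftInvariant _

end UniformMeasure

section OneTimePad

variable {Ω G : Type*} [MeasurableSpace Ω] [AddGroup G] [MeasurableSpace G] [MeasurableAdd₂ G]
  {μ : Measure Ω} {V U : Ω → G}

lemma map_prodMk_add_eq_prod [IsFiniteMeasure μ] [(μ.map U).IsAddLeftInvariant]
    (hV : AEMeasurable V μ) (hU : AEMeasurable U μ) (hVU : IndepFun V U μ) :
    μ.map (fun ω ↦ (V ω, V ω + U ω)) = (μ.map V).prod (μ.map U) := by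
  have shear := measurePreserving_prod_add (μ.map V) (μ.map U)
  calc μ.map (fun ω ↦ (V ω, V ω + U ω))
      = (μ.map fun ω ↦ (V ω, U ω)).map (fun p ↦ (p.1, p.1 + p.2)) :=
        (shear.measurable.aemeasurable.map_map_of_aemeasurable (hV.prodMk hU)).symm
    _ = ((μ.map V).prod (μ.map U)).map (fun p ↦ (p.1, p.1 + p.2)) := by
        rw [hVU.map_prod_eq_prod_map_map hV hU]
    _ = (μ.map V).prod (μ.map U) := shear.map_eq

variable [IsProbabilityMeasure μ] [(μ.map U).IsAddLeftInvariant]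

lemma map_add_eq_map_right (hV : AEMeasurable V μ) (hU : AEMeasurable U μ)
    (hVU : IndepFun V U μ) : μ.map (V + U) = μ.map U := by
  have := Measure.isProbabilityMeasure_map hV
  calc μ.map (V + U)
      = (μ.map fun ω ↦ (V ω, V ω + U ω)).map Prod.snd :=
        (measurable_snd.aemeasurable.map_map_of_aemeasurable (hV.prodMk (hV.add hU))).symm
    _ = μ.map U := by simp [map_prodMk_add_eq_prod hV hU hVU]

lemma indepFun_add_right (hV : AEMeasurable V μ) (hU : AEMeasurable U μ)
    (hVU : IndepFun V U μ) : IndepFun V (V + U) μ := by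
  rw [indepFun_iff_map_prod_eq_prod_map_map hV (hV.add hU), map_add_eq_map_right hV hU hVU]
  exact map_prodMk_add_eq_prod hV hU hVU

end OneTimePad

lemma map_add_hom_eq_uniform_and_indepFun {Ω G H : Type*} [MeasurableSpace Ω]
    [AddGroup G] [Fintype G] [MeasurableSpace G] [DiscreteMeasurableSpace G]
    [AddGroup H] [Fintype H] [MeasurableSpace H] [DiscreteMeasurableSpace H]
    {μ : Measure Ω} [IsProbabilityMeasure μ] {V : Ω → H} {Z : Ω → G}
    (f : G →+ H) (hf : Function.Surjective f)
    (hV : AEMeasurable V μ) (hZ : AEMeasurable Z μ)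
    (hZ_unif : μ.map Z = (PMF.uniformOfFintype G).toMeasure) (hVZ : IndepFun V Z μ) :
    μ.map (fun ω ↦ V ω + f (Z ω)) = (PMF.uniformOfFintype H).toMeasure ∧
      IndepFun V (fun ω ↦ V ω + f (Z ω)) μ := by
  have hfm : Measurable f := .of_discrete
  have hfZ : AEMeasurable (fun ω ↦ f (Z ω)) μ := hfm.comp_aemeasurable hZ
  have hfZ_unif : μ.map (fun ω ↦ f (Z ω)) = (PMF.uniformOfFintype H).toMeasure := by
    rw [← map_toMeasure_uniformOfFintype_of_surjective f hf, ← hZ_unif,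
      hfm.aemeasurable.map_map_of_aemeasurable hZ, Function.comp_def]
  have : (μ.map fun ω ↦ f (Z ω)).IsAddLeftInvariant := hfZ_unif ▸ inferInstance
  have hVfZ : IndepFun V (fun ω ↦ f (Z ω)) μ := hVZ.comp measurable_id hfm
  exact ⟨(map_add_eq_map_right hV hfZ hVfZ).trans hfZ_unif, indepFun_add_right hV hfZ hVfZ⟩

section Vandermonde

open Matrix

lemma mulVec_surjective_of_submatrix {S ι n p : Type*} [Semiring S] [Fintype n] [Fintype p]
    (M : Matrix ι n S) (c : p → n) (h : Function.Surjective (M.submatrix id c).mulVec) :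
    Function.Surjective M.mulVec := by
  classical
  intro b
  obtain ⟨y, hy⟩ := h b
  refine ⟨(1 : Matrix n n S).submatrix id c *ᵥ y, ?_⟩
  rw [mulVec_mulVec, ← hy]
  exact congrArg (· *ᵥ y) (mul_submatrix_one (Equiv.refl n) c M)

/-- The matrix `(β_j ^ i)` with `1 ≤ i ≤ m` that mixes the pad: a rectangular Vandermonde matrix
without its column of ones. Columns are indexed from `0`, so column `i` holds the powers
`β_j ^ (i + 1)`. -/
def shiftedVandermonde {S ι : Type*} [Monoid S] (β : ι → S) (m : ℕ) : Matrix ι (Fin m) S :=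
  of fun j i ↦ β j ^ ((i : ℕ) + 1)

variable {R : Type*} [CommRing R]

lemma shiftedVandermonde_submatrix_castLE {k m : ℕ} (hkm : k ≤ m) (β : Fin k → R) :
    (shiftedVandermonde β m).submatrix id (Fin.castLE hkm) = diagonal β * vandermonde β := by
  ext j i
  simp [shiftedVandermonde, diagonal_mul, vandermonde_apply, pow_succ']

lemma isUnit_det_vandermonde {k : ℕ} {β : Fin k → R}
    (hβ : Pairwise fun i j ↦ IsUnit (β j - β i)) : IsUnit (vandermonde β).det := by
  rw [det_vandermonde]
  simp only [IsUnit.prod_iff, Finset.mem_Ioi]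
  exact fun i _ j hij ↦ hβ hij.ne

lemma shiftedVandermonde_mulVec_surjective {k m : ℕ} (hkm : k ≤ m) {β : Fin k → R}
    (hβ : Pairwise fun i j ↦ IsUnit (β j - β i)) (hβ0 : ∀ j, IsUnit (β j)) :
    Function.Surjective (shiftedVandermonde β m).mulVec := by
  refine mulVec_surjective_of_submatrix _ (Fin.castLE hkm) ?_
  rw [shiftedVandermonde_submatrix_castLE, mulVec_surjective_iff_isUnit, isUnit_iff_isUnit_det,
    det_mul, det_diagonal]
  exact (IsUnit.prod_univ_iff.2 hβ0).mul (isUnit_det_vandermonde hβ)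

end Vandermonde

theorem stmt4_general {R : Type*} [CommRing R] [Fintype R] [MeasurableSpace R]
    [DiscreteMeasurableSpace R] {Ω : Type*} [MeasurableSpace Ω] (Pr : Measure Ω)
    [IsProbabilityMeasure Pr] {k m : ℕ} (hkm : k ≤ m) {β : Fin k → R}
    (hβ : Pairwise fun i j ↦ IsUnit (β j - β i)) (hβ0 : ∀ j, IsUnit (β j))
    {V : Ω → (Fin k → R)} {Z : Ω → (Fin m → R)} (hV : AEMeasurable V Pr) (hZ : AEMeasurable Z Pr)
    (hZ_unif : Measure.map Z Pr = (PMF.uniformOfFintype (Fin m → R)).toMeasure)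
    (hVZ : IndepFun V Z Pr) :
    Measure.map (fun ω (j : Fin k) => V ω j + ∑ i : Fin m, β j ^ ((i : ℕ) + 1) * Z ω i) Pr
      = (PMF.uniformOfFintype (Fin k → R)).toMeasure ∧
    IndepFun V (fun ω (j : Fin k) => V ω j + ∑ i : Fin m, β j ^ ((i : ℕ) + 1) * Z ω i) Pr :=
  map_add_hom_eq_uniform_and_indepFun (shiftedVandermonde β m).mulVecLin.toAddMonoidHom
    (shiftedVandermonde_mulVec_surjective hkm hβ hβ0) hV hZ hZ_unif hVZ

/-- Mixing one-time pad: for pairwise distinct nonzero `β_1, …, β_k` and `Z` uniform on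
`Fin m → F` independent of `V`, the vector `A` with `A_j = V_j + ∑_{i=1}^m β_j^i Z_i`
is uniform on `Fin k → F` and independent of `V`. -/
theorem stmt4 {F : Type*} [Field F] [Fintype F] [MeasurableSpace F] [DiscreteMeasurableSpace F]
    {Ω : Type*} [MeasurableSpace Ω] (Pr : Measure Ω) [IsProbabilityMeasure Pr]
    (k m : ℕ) (hk : 1 ≤ k) (hkm : k ≤ m)
    (β : Fin k → F) (hβ : Function.Injective β) (hβ0 : ∀ j, β j ≠ 0)
    (V : Ω → (Fin k → F)) (Z : Ω → (Fin m → F))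
    (hVm : Measurable V) (hZm : Measurable Z)
    (hZ : Measure.map Z Pr = (PMF.uniformOfFintype (Fin m → F)).toMeasure)
    (hindep : IndepFun V Z Pr) :
    Measure.map (fun ω (j : Fin k) => V ω j + ∑ i : Fin m, β j ^ ((i : ℕ) + 1) * Z ω i) Pr
      = (PMF.uniformOfFintype (Fin k → F)).toMeasure ∧
    IndepFun V (fun ω (j : Fin k) => V ω j + ∑ i : Fin m, β j ^ ((i : ℕ) + 1) * Z ω i) Pr := by
  exact stmt4_general Pr hkm (fun _ _ hij ↦ (sub_ne_zero.2 (hβ.ne hij.symm)).isUnit)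
    (fun j ↦ (hβ0 j).isUnit) hVm.aemeasurable hZm.aemeasurable hZ hindep
end

section
/- (Lemma 5: security against N communicating databases.) Let F be a finite field, N ≥ 1, and let β_1, …, β_N ∈ F be pairwise distinct and nonzero. Let (Ω, ℙ) be a probability space, P : Ω → F any random variable, and X : Ω → (Fin N → F) uniformly distributed and independent of P. Define U : Ω → (Fin N → F) by U_k = P + Σ_{ℓ=1}^N β_k^ℓ X_ℓ. Then P and U are independent; i.e., any N of the encoded shares P + Σ_ℓ (1+α_j)^ℓ X_ℓ reveal no information about the secret P. -/
open MeasureTheory ProbabilityTheory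

/-!
Conditionally on `P = p`, the share vector is the image of the uniform vector `X` under the affine
map `x ↦ (p, …, p) + A x` with `A k ℓ = β_k ^ (ℓ + 1)`. Since `A` is a Vandermonde matrix with its
`k`-th row scaled by `β_k`, this map is injective, hence a permutation of a finite set, and the
conditional law of the shares is uniform whatever `p` is.
-/

section Masking

variable {Ω α β γ : Type*} [MeasurableSpace Ω] [MeasurableSpace α] [MeasurableSpace β]
  [MeasurableSpace γ] {μ : Measure Ω} {P : Ω → α} {X : Ω → β} {g : α → β → γ}

theorem indepFun_of_ae_map_eq [IsProbabilityMeasure μ] {ν : Measure β} {ρ : Measure γ}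
    (hP : AEMeasurable P μ) (hX : HasLaw X ν μ) (hPX : IndepFun P X μ)
    (hg : Measurable (Function.uncurry g)) (hgν : ∀ᵐ p ∂μ.map P, ν.map (g p) = ρ) :
    IndepFun P (fun ω => g (P ω) (X ω)) μ := by
  have hP_law : HasLaw P (μ.map P) μ := ⟨hP, rfl⟩
  have : IsProbabilityMeasure (μ.map P) := Measure.isProbabilityMeasure_map hP
  have : IsProbabilityMeasure ν := hX.isProbabilityMeasure_iff.1 ‹_›
  have joint_law : HasLaw (fun ω => (P ω, g (P ω) (X ω))) ((μ.map P).prod ρ) μ :=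
    ((MeasurePreserving.id _).skew_product hg hgν).fun_comp_hasLaw (hPX.hasLaw_prod hP_law hX)
  have : SFinite ρ := by
    obtain ⟨p, rfl⟩ := hgν.exists
    infer_instance
  have masked_law : HasLaw (fun ω => g (P ω) (X ω)) ρ μ :=
    measurePreserving_snd.fun_comp_hasLaw joint_law
  exact (indepFun_iff_hasLaw_prodMk_prod hP_law masked_law).2 joint_law

theorem map_uniformOfFintype_of_bijective {ι κ : Type*} [Fintype ι] [Nonempty ι] [Fintype κ]
    [Nonempty κ] {f : ι → κ} (hf : Function.Bijective f) :
    (PMF.uniformOfFintype ι).map f = PMF.uniformOfFintype κ := by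
  classical
  ext b
  obtain ⟨a, rfl⟩ := hf.surjective b
  simp [PMF.map_apply, hf.injective.eq_iff, Fintype.card_of_bijective hf]

theorem indepFun_of_forall_bijective [Fintype β] [Nonempty β]
    (hP : AEMeasurable P μ) (hX : HasLaw X (PMF.uniformOfFintype β).toMeasure μ)
    (hPX : IndepFun P X μ) (hg : Measurable (Function.uncurry g))
    (hg_bij : ∀ p, Function.Bijective (g p)) :
    IndepFun P (fun ω => g (P ω) (X ω)) μ := by
  have : IsProbabilityMeasure μ := hX.isProbabilityMeasure
  obtain ⟨ω⟩ : Nonempty Ω := nonempty_of_isProbabilityMeasure μ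
  let : Fintype γ := .ofBijective (g (P ω)) (hg_bij (P ω))
  have : Nonempty γ := .map (g (P ω)) inferInstance
  have map_uniform (p : α) :
      (PMF.uniformOfFintype β).toMeasure.map (g p) = (PMF.uniformOfFintype γ).toMeasure := by
    rw [PMF.toMeasure_map _ _ hg.of_uncurry_left, map_uniformOfFintype_of_bijective (hg_bij p)]
  exact indepFun_of_ae_map_eq hP hX hPX hg (ae_of_all _ map_uniform)

end Masking

section Shares

open Matrix
open scoped nonZeroDivisors

variable {R : Type*} [CommRing R] {N : ℕ} {β : Fin N → R}

theorem det_vandermonde_mem_nonZeroDivisors (hβ : Pairwise fun i j => β i - β j ∈ R⁰) :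
    (vandermonde β).det ∈ R⁰ := by
  rw [det_vandermonde]
  exact prod_mem fun i _ => prod_mem fun j hij => hβ (Finset.mem_Ioi.1 hij).ne'

theorem injective_sum_pow_succ_mul (hβ : Pairwise fun i j => β i - β j ∈ R⁰)
    (hβ0 : ∀ k, β k ∈ R⁰) :
    Function.Injective fun (x : Fin N → R) k => ∑ ℓ : Fin N, β k ^ ((ℓ : ℕ) + 1) * x ℓ := by
  have det_mem : (diagonal β * vandermonde β).det ∈ R⁰ := by
    rw [det_mul, det_diagonal]
    exact mul_mem (prod_mem fun k _ => hβ0 k) (det_vandermonde_mem_nonZeroDivisors hβ)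
  convert mulVec_injective_of_det_mem_nonZeroDivisors det_mem using 3 with x k
  simp only [mulVec, dotProduct, diagonal_mul, vandermonde_apply, pow_succ']

theorem stmt5_general [Fintype R] [MeasurableSpace R] [DiscreteMeasurableSpace R]
    {Ω : Type*} [MeasurableSpace Ω] {μ : Measure Ω} {P : Ω → R} {X : Ω → (Fin N → R)}
    (hβ : Pairwise fun i j => β i - β j ∈ R⁰) (hβ0 : ∀ k, β k ∈ R⁰) (hP : AEMeasurable P μ)
    (hX : HasLaw X (PMF.uniformOfFintype (Fin N → R)).toMeasure μ) (hPX : IndepFun P X μ) :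
    IndepFun P (fun ω (k : Fin N) => P ω + ∑ ℓ : Fin N, β k ^ ((ℓ : ℕ) + 1) * X ω ℓ) μ := by
  let share (p : R) (x : Fin N → R) (k : Fin N) : R := p + ∑ ℓ : Fin N, β k ^ ((ℓ : ℕ) + 1) * x ℓ
  have share_bijective (p : R) : Function.Bijective (share p) :=
    Finite.injective_iff_bijective.1 <|
      (add_right_injective (Function.const _ p)).comp (injective_sum_pow_succ_mul hβ hβ0)
  exact indepFun_of_forall_bijective hP hX hPX .of_discrete share_bijective

end Shares

/-- Security against `N` communicating databases: for pairwise distinct nonzero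
`β_1, …, β_N` and `X` uniform on `Fin N → F` independent of the secret `P`,
the `N` encoded shares `U_k = P + ∑_{ℓ=1}^N β_k^ℓ X_ℓ` are independent of `P`. -/
theorem stmt5 {F : Type*} [Field F] [Fintype F] [MeasurableSpace F] [DiscreteMeasurableSpace F]
    {Ω : Type*} [MeasurableSpace Ω] (Pr : Measure Ω) [IsProbabilityMeasure Pr]
    (N : ℕ) (hN : 1 ≤ N)
    (β : Fin N → F) (hβ : Function.Injective β) (hβ0 : ∀ j, β j ≠ 0)
    (P : Ω → F) (X : Ω → (Fin N → F))
    (hPm : Measurable P) (hXm : Measurable X)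
    (hX : Measure.map X Pr = (PMF.uniformOfFintype (Fin N → F)).toMeasure)
    (hindep : IndepFun P X Pr) :
    IndepFun P (fun ω (k : Fin N) => P ω + ∑ ℓ : Fin N, β k ^ ((ℓ : ℕ) + 1) * X ω ℓ) Pr :=
  stmt5_general
    (fun _ _ hij => mem_nonZeroDivisors_of_ne_zero (sub_ne_zero.2 (hβ.ne hij)))
    (fun k => mem_nonZeroDivisors_of_ne_zero (hβ0 k))
    hPm.aemeasurable ⟨hXm.aemeasurable, hX⟩ hindep
end

section
/- (Correctness of the SPMA type I scheme; achievability in Theorem 2.) Let F be a field, E ≥ 1, M ≥ 1, N ≥ 1, and let β : Fin N → F be injective. Fix θ : Fin E, incidence vectors p : Fin M → (Fin E → F), query noise z : Fin M → Fin (N-1) → (Fin E → F), server-side noise z' : Fin M → Fin (N-1) → F, and masks s : Fin M → Fin N → F satisfying Σ_{i=1}^M s_{i,j} = 0 for every j. Define queries q_{i,j}(e) = 𝟙{e = θ} + Σ_{ℓ=1}^{N-1} β_j^ℓ z_{i,ℓ}(e) and answers a_{i,j} = Σ_{e} p_i(e) · q_{i,j}(e) + Σ_{ℓ=1}^{N-1}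 β_j^ℓ z'_{i,ℓ} + s_{i,j}. Let Υ be the N×N Vandermonde matrix with entries Υ_{j,ℓ} = β_j^ℓ for ℓ ∈ {0, …, N-1}. Then the 0-th entry of Υ⁻¹ applied to the vector (Σ_{i=1}^M a_{i,j})_{j ∈ Fin N} equals Σ_{i=1}^M p_i(θ): the extra noise z' added by the databases to achieve symmetric privacy does not affect decodability of the count. -/
open Matrix

/-! The noise of the queries and of the servers enters every answer only through the powers
`β_j ^ ℓ` with `ℓ ≥ 1`. Once the masks cancel, the summed answers are therefore the values at the
nodes `β_j` of one polynomial of degree less than `N` whose constant coefficient is the membership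
count, and inverting the Vandermonde matrix interpolates that polynomial. -/

section Vandermonde

variable {R : Type*} [CommRing R] {n : ℕ}

theorem isUnit_det_vandermonde_iff {v : Fin n → R} :
    IsUnit (vandermonde v).det ↔ Pairwise fun j k => IsUnit (v j - v k) := by
  simp only [det_vandermonde, IsUnit.prod_iff, Finset.mem_univ, Finset.mem_Ioi, true_imp_iff]
  refine ⟨fun h j k hjk => ?_, fun h j k hjk => h hjk.ne'⟩
  rcases hjk.lt_or_gt with hlt | hgt
  · exact IsUnit.sub_iff.mp (h j k hlt)
  · exact h k j hgt

theorem vandermonde_mulVec_vecCons (v : Fin (n + 1) → R) (x : R) (d : Fin n → R)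
    (j : Fin (n + 1)) :
    (vandermonde v *ᵥ vecCons x d) j = x + (fun ℓ : Fin n => v j ^ ((ℓ : ℕ) + 1)) ⬝ᵥ d := by
  simp [mulVec, dotProduct, Fin.sum_univ_succ]

theorem vandermonde_inv_mulVec_zero {v : Fin (n + 1) → R}
    (hv : Pairwise fun j k => IsUnit (v j - v k)) {u : Fin (n + 1) → R} {x : R} {d : Fin n → R}
    (hu : ∀ j, u j = x + (fun ℓ : Fin n => v j ^ ((ℓ : ℕ) + 1)) ⬝ᵥ d) :
    ((vandermonde v)⁻¹ *ᵥ u) 0 = x := by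
  have hu' : u = vandermonde v *ᵥ vecCons x d :=
    funext fun j => (hu j).trans (vandermonde_mulVec_vecCons v x d j).symm
  let := invertibleOfIsUnitDet _ (isUnit_det_vandermonde_iff.mpr hv)
  rw [inv_mulVec_eq_vec hu', cons_val_zero]

end Vandermonde

section Answers

variable {R κ Λ : Type*} [CommSemiring R] [Fintype Λ]

/-- The query of the scheme to one database, asking for message `θ`: the rows of `z` are the noise
vectors, and `c` lists the coefficients `β, …, β ^ (N - 1)` that the node `β` of the database gives
them. -/
def spmaQuery [DecidableEq κ] (c : Λ → R) (θ : κ) (z : Matrix Λ κ R) : κ → R :=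
  Pi.single θ 1 + c ᵥ* z

/-- The answer to the query `q` of a database with noise coefficients `c`, in a party with incidence
vector `p` and server-side noise `z'`; `s` is the mask. -/
def spmaAnswer [Fintype κ] (c : Λ → R) (p q : κ → R) (z' : Λ → R) (s : R) : R :=
  p ⬝ᵥ q + c ⬝ᵥ z' + s

variable [Fintype κ] [DecidableEq κ]

theorem spmaAnswer_spmaQuery (c : Λ → R) (θ : κ) (p : κ → R) (z : Matrix Λ κ R) (z' : Λ → R)
    (s : R) :
    spmaAnswer c p (spmaQuery c θ z) z' s = p θ + c ⬝ᵥ (z *ᵥ p + z') + s := by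
  have noise_dot : p ⬝ᵥ (c ᵥ* z) = c ⬝ᵥ (z *ᵥ p) := by
    rw [dotProduct_mulVec, dotProduct_comm]
  rw [spmaAnswer, spmaQuery, dotProduct_add, dotProduct_single_one, noise_dot, dotProduct_add,
    add_assoc (p θ)]

theorem sum_spmaAnswer_spmaQuery {ι : Type*} [Fintype ι] (c : Λ → R) (θ : κ) (p : ι → κ → R)
    (z : ι → Matrix Λ κ R) (z' : ι → Λ → R) {s : ι → R} (hs : ∑ i, s i = 0) :
    ∑ i, spmaAnswer c (p i) (spmaQuery c θ (z i)) (z' i) (s i)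
      = ∑ i, p i θ + c ⬝ᵥ ∑ i, (z i *ᵥ p i + z' i) := by
  simp only [spmaAnswer_spmaQuery, Finset.sum_add_distrib, hs, add_zero, dotProduct_sum,
    dotProduct_add]

end Answers

theorem stmt9_general {R ι κ : Type*} [CommRing R] [Fintype ι] [Fintype κ] [DecidableEq κ] {n : ℕ}
    {β : Fin (n + 1) → R} (hβ : Pairwise fun j k => IsUnit (β j - β k))
    (θ : κ) (p : ι → κ → R) (z : ι → Fin n → κ → R) (z' : ι → Fin n → R)
    {s : ι → Fin (n + 1) → R} (hs : ∀ j, ∑ i, s i j = 0)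
    {q : ι → Fin (n + 1) → κ → R}
    (hq : ∀ i j e, q i j e
      = (if e = θ then 1 else 0) + ∑ ℓ : Fin n, β j ^ ((ℓ : ℕ) + 1) * z i ℓ e)
    {a : ι → Fin (n + 1) → R}
    (ha : ∀ i j, a i j
      = (∑ e, p i e * q i j e) + (∑ ℓ : Fin n, β j ^ ((ℓ : ℕ) + 1) * z' i ℓ) + s i j)
    {V : Matrix (Fin (n + 1)) (Fin (n + 1)) R} (hV : ∀ j ℓ, V j ℓ = β j ^ (ℓ : ℕ)) :
    (V⁻¹ *ᵥ fun j => ∑ i, a i j) 0 = ∑ i, p i θ := by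
  let c (j : Fin (n + 1)) (ℓ : Fin n) : R := β j ^ ((ℓ : ℕ) + 1)
  obtain rfl : V = vandermonde β := Matrix.ext hV
  have query_eq (i j) : q i j = spmaQuery (c j) θ (z i) := by
    ext e
    rw [hq, ← Pi.single_apply]
    rfl
  have answer_eq (i j) :
      a i j = spmaAnswer (c j) (p i) (spmaQuery (c j) θ (z i)) (z' i) (s i j) := by
    rw [ha, query_eq]
    rfl
  refine vandermonde_inv_mulVec_zero hβ (d := ∑ i, (z i *ᵥ p i + z' i)) fun j => ?_
  simp only [answer_eq]
  exact sum_spmaAnswer_spmaQuery (c j) θ p z z' (hs j)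

/-- Correctness of the SPMA type I scheme: the extra server-side noise `z'` added to achieve
symmetric privacy does not affect decodability of the membership count `∑ i, p i θ`. -/
theorem stmt9 {F : Type*} [Field F] (E M N : ℕ) (hE : 1 ≤ E) (hM : 1 ≤ M) (hN : 1 ≤ N)
    (β : Fin N → F) (hβ : Function.Injective β)
    (θ : Fin E) (p : Fin M → Fin E → F) (z : Fin M → Fin (N - 1) → Fin E → F)
    (z' : Fin M → Fin (N - 1) → F)
    (s : Fin M → Fin N → F) (hs : ∀ j, ∑ i, s i j = 0)
    (q : Fin M → Fin N → Fin E → F)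
    (hq : ∀ i j e, q i j e
      = (if e = θ then 1 else 0) + ∑ ℓ : Fin (N - 1), β j ^ ((ℓ : ℕ) + 1) * z i ℓ e)
    (a : Fin M → Fin N → F)
    (ha : ∀ i j, a i j
      = (∑ e, p i e * q i j e) + (∑ ℓ : Fin (N - 1), β j ^ ((ℓ : ℕ) + 1) * z' i ℓ) + s i j)
    (Vmat : Matrix (Fin N) (Fin N) F) (hVmat : ∀ j ℓ, Vmat j ℓ = β j ^ (ℓ : ℕ)) :
    (Vmat⁻¹ *ᵥ (fun j => ∑ i, a i j)) ⟨0, hN⟩ = ∑ i, p i θ := by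
  obtain ⟨n, rfl⟩ := Nat.exists_eq_add_of_le' hN
  exact stmt9_general (fun j k hjk => (sub_ne_zero.mpr (hβ.ne hjk)).isUnit) θ p z z' hs hq ha hVmat
end

section
/- (Cross-subspace alignment identity for the type II scheme.) Let F be a field, E ≥ 1, M ≥ 1, N ≥ 1, μ ≥ 1, and let β : J → F be any family of evaluation points indexed by a type J. Fix θ : Fin E, p : Fin M → (Fin E → F), x : Fin N → (Fin E → F), and z : Fin μ → (Fin E → F). Define p̃_j(e) = Σ_{i=1}^M p_i(e) + Σ_{ℓ=1}^N β_j^ℓ x_ℓ(e) and q_j(e) = 𝟙{e = θ} + Σ_{k=1}^μ β_j^k z_k(e). Then there exist coefficients c_1, …, c_{N+μ} ∈ F, not depending on j, such that for every j ∈ J: Σ_{e} p̃_j(e) · q_j(e) = Σ_{i=1}^M p_i(θ) + Σ_{d=1}^{N+μ} β_j^d c_d. That is, the inner product of encoded storage and query is the evaluation at β_j of a polynomial of degree at most N+μ whose constant term is the desired count Σ_i p_i(θ). -/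
/-
Replace the evaluation point by an indeterminate `X`. Storage and query become polynomials of
degrees at most `N` and `μ` whose constant terms are the unmasked data, so the inner product of the
two has degree at most `N + μ`, and its constant term is the inner product of the unmasked data.
Since the unmasked query is the indicator of `θ`, that inner product is the desired count.
-/

section MaskedPolynomial

open Polynomial

variable {R : Type*}

/-- The encoding `a + y₀ X + ⋯ + yₙ₋₁ Xⁿ` of a data symbol `a` by masks `y`, as a polynomial in the
evaluation point. The mask `y k` is the coefficient of `X ^ (k + 1)`, so no mask meets `a`. -/
noncomputable def maskedPolynomial [Semiring R] {n : ℕ} (a : R) (y : Fin n → R) : R[X] :=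
  C a + ∑ k : Fin n, X ^ ((k : ℕ) + 1) * C (y k)

theorem coeff_zero_maskedPolynomial [Semiring R] {n : ℕ} (a : R) (y : Fin n → R) :
    (maskedPolynomial a y).coeff 0 = a := by
  simp [maskedPolynomial]

theorem natDegree_maskedPolynomial_le [Semiring R] {n : ℕ} (a : R) (y : Fin n → R) :
    (maskedPolynomial a y).natDegree ≤ n := by
  refine natDegree_add_le_of_degree_le (by simp) (natDegree_sum_le_of_forall_le _ _ fun k _ => ?_)
  calc (X ^ ((k : ℕ) + 1) * C (y k)).natDegree
      ≤ (X ^ ((k : ℕ) + 1) : R[X]).natDegree := natDegree_mul_C_le _ _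
    _ ≤ (k : ℕ) + 1 := natDegree_X_pow_le _
    _ ≤ n := k.isLt

theorem eval_maskedPolynomial [CommSemiring R] {n : ℕ} (b a : R) (y : Fin n → R) :
    (maskedPolynomial a y).eval b = a + ∑ k : Fin n, b ^ ((k : ℕ) + 1) * y k := by
  simp only [maskedPolynomial, eval_add, eval_C, eval_finsetSum, eval_mul, eval_pow, eval_X]

theorem maskedPolynomial_coeff_of_natDegree_le [Semiring R] {n : ℕ} {f : R[X]}
    (hf : f.natDegree ≤ n) :
    maskedPolynomial (f.coeff 0) (fun d : Fin n => f.coeff ((d : ℕ) + 1)) = f := by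
  rw [maskedPolynomial, Fin.sum_univ_eq_sum_range (fun d => X ^ (d + 1) * C (f.coeff (d + 1)))]
  conv_rhs => rw [f.as_sum_range_C_mul_X_pow' (Nat.lt_succ_of_le hf), Finset.sum_range_succ']
  simp only [pow_zero, mul_one, X_pow_mul_C, add_comm]

theorem exists_sum_maskedPolynomial_mul_eq [Semiring R] {ε : Type*} [Fintype ε] {m n : ℕ}
    (a b : ε → R) (x : Fin m → ε → R) (z : Fin n → ε → R) :
    ∃ c : Fin (m + n) → R,
      ∑ e, maskedPolynomial (a e) (x · e) * maskedPolynomial (b e) (z · e) =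
        maskedPolynomial (∑ e, a e * b e) c := by
  set f : R[X] := ∑ e, maskedPolynomial (a e) (x · e) * maskedPolynomial (b e) (z · e) with hf
  have natDegree_le : f.natDegree ≤ m + n :=
    natDegree_sum_le_of_forall_le _ _ fun _ _ =>
      natDegree_mul_le_of_le (natDegree_maskedPolynomial_le _ _) (natDegree_maskedPolynomial_le _ _)
  have coeff_zero : f.coeff 0 = ∑ e, a e * b e := by
    simp only [hf, finsetSum_coeff, mul_coeff_zero, coeff_zero_maskedPolynomial]
  refine ⟨fun d => f.coeff ((d : ℕ) + 1), ?_⟩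
  rw [← coeff_zero, maskedPolynomial_coeff_of_natDegree_le natDegree_le]

end MaskedPolynomial

theorem stmt12_general {R ε ι : Type*} [CommSemiring R] [Fintype ε] [DecidableEq ε] [Fintype ι]
    {N μ : ℕ} (θ : ε) (p : ι → ε → R) (x : Fin N → ε → R) (z : Fin μ → ε → R) :
    ∃ c : Fin (N + μ) → R, ∀ b : R,
      (∑ e, ((∑ i, p i e) + ∑ ℓ : Fin N, b ^ ((ℓ : ℕ) + 1) * x ℓ e) *
        ((if e = θ then 1 else 0) + ∑ k : Fin μ, b ^ ((k : ℕ) + 1) * z k e))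
      = (∑ i, p i θ) + ∑ d : Fin (N + μ), b ^ ((d : ℕ) + 1) * c d := by
  obtain ⟨c, hc⟩ := exists_sum_maskedPolynomial_mul_eq
    (fun e => ∑ i, p i e) (fun e => if e = θ then 1 else 0) x z
  have count : ∑ e, (∑ i, p i e) * (if e = θ then 1 else 0) = ∑ i, p i θ := by simp
  refine ⟨c, fun b => ?_⟩
  simpa only [Polynomial.eval_finsetSum, Polynomial.eval_mul, eval_maskedPolynomial, count]
    using congrArg (Polynomial.eval b) hc

/-- Cross-subspace alignment identity for the type II scheme: the inner product of encoded
storage and query is the evaluation at `β_j` of a polynomial of degree at most `N + μ`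
whose constant term is the desired count `∑ i, p i θ`. -/
theorem stmt12 {F : Type*} [Field F] {J : Type*} (E M N μ : ℕ) (hE : 1 ≤ E) (hM : 1 ≤ M)
    (hN : 1 ≤ N) (hμ : 1 ≤ μ) (β : J → F)
    (θ : Fin E) (p : Fin M → Fin E → F) (x : Fin N → Fin E → F) (z : Fin μ → Fin E → F) :
    ∃ c : Fin (N + μ) → F, ∀ j : J,
      (∑ e, ((∑ i, p i e) + ∑ ℓ : Fin N, β j ^ ((ℓ : ℕ) + 1) * x ℓ e) *
        ((if e = θ then 1 else 0) + ∑ k : Fin μ, β j ^ ((k : ℕ) + 1) * z k e))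
      = (∑ i, p i θ) + ∑ d : Fin (N + μ), β j ^ ((d : ℕ) + 1) * c d := by
  obtain ⟨c, hc⟩ := stmt12_general θ p x z
  exact ⟨c, fun j => hc (β j)⟩
end

section
/- (Lemma 7: eavesdropper security for the SPMA type II scheme.) Let F be a finite field, n ≥ 2, and let β_1, …, β_n ∈ F be pairwise distinct and nonzero. Let (Ω, ℙ) be a probability space, let V : Ω → (Fin n → F) be any random variable (V_j representing the noise-free part p̃_j·q_j of the j-th answer, which is a deterministic function of the parties' data Σ_i P_i and the query), and let Z' : Ω → (Fin (n-1) → F) be uniformly distributed and independent of V. Define the answers A_j = V_j + Σ_{i=1}^{n-1} β_j^i Z'_i. Then for every subset 𝒴 ⊆ Fin n with |𝒴| ≤ n−1, the tuple (A_j)_{j ∈ 𝒴} is uniformly distributed on (Fin E → F)-free product F^{|𝒴|} and is independent of V: an eavesdropper observing at most n−1 answer links learns nothing about the parties' aggregated incidence data. -/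
open MeasureTheory ProbabilityTheory

/-!
The mask added to the observed answers is the image of the shared randomness under the matrix with
entries `β_j ^ (i + 1)`. By Lagrange interpolation at the distinct nodes `β_j`, a Vandermonde matrix
with at least as many columns as rows is surjective, and rescaling row `j` by `β_j ≠ 0` preserves
this. A surjective homomorphism of finite groups has fibres of equal size, so the mask is uniform
on its target, and so is any translate of it. Thus the conditional law of the observed answers
given the data does not depend on the data, which is independence.
-/

section UniformLaw

theorem uniformOfFintype_map_of_card_fiber_eq {α β : Type*} [Fintype α] [Nonempty α] [Fintype β]
    [Nonempty β] [DecidableEq β] {f : α → β} {k : ℕ}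
    (hf : ∀ b, (Finset.univ.filter (f · = b)).card = k) :
    (PMF.uniformOfFintype α).map f = PMF.uniformOfFintype β := by
  have card_eq : Fintype.card α = k * Fintype.card β := by
    rw [← Finset.card_univ, Finset.card_eq_sum_card_fiberwise fun a _ => Finset.mem_univ (f a)]
    simp only [hf, Finset.sum_const, Finset.card_univ, smul_eq_mul, mul_comm]
  have k_ne_zero : k ≠ 0 := by
    rintro rfl
    exact Fintype.card_ne_zero (card_eq.trans (zero_mul _))
  ext b
  calc (PMF.uniformOfFintype α).map f b
      = (k : ENNReal) * (Fintype.card α : ENNReal)⁻¹ := by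
        simp only [PMF.map_apply, PMF.uniformOfFintype_apply, tsum_fintype, ← Finset.sum_filter,
          eq_comm (a := b), Finset.sum_const, hf, nsmul_eq_mul]
    _ = (Fintype.card β : ENNReal)⁻¹ := by
        have k_ne_zero' : (k : ENNReal) ≠ 0 := Nat.cast_ne_zero.2 k_ne_zero
        rw [card_eq, Nat.cast_mul, ENNReal.mul_inv (.inl k_ne_zero') (.inl (by simp)), ← mul_assoc,
          ENNReal.mul_inv_cancel k_ne_zero' (by simp), one_mul]
    _ = PMF.uniformOfFintype β b := (PMF.uniformOfFintype_apply b).symm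

theorem uniformOfFintype_map_const_add_of_surjective {G H : Type*} [AddGroup G] [Fintype G]
    [AddGroup H] [Fintype H] {L : G →+ H} (hL : Function.Surjective L) (c : H) :
    (PMF.uniformOfFintype G).map (fun x => c + L x) = PMF.uniformOfFintype H := by
  classical
  refine uniformOfFintype_map_of_card_fiber_eq
    (k := (Finset.univ.filter (L · = 0)).card) fun b => ?_
  simp only [← eq_neg_add_iff_add_eq]
  exact AddMonoidHom.card_fiber_eq_of_mem_range L (hL _) (hL 0)

end UniformLaw

section Masking

variable {Ω S : Type*} [MeasurableSpace Ω] [MeasurableSpace S] {P : Measure Ω} {X : Ω → S}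

theorem hasLaw_and_indepFun_of_ae_map_eq {R T : Type*} [MeasurableSpace R] [MeasurableSpace T]
    [IsProbabilityMeasure P] {Z : Ω → R} {ρ : Measure S} {μ : Measure R} {ν : Measure T}
    {g : S → R → T} (hX : HasLaw X ρ P) (hZ : HasLaw Z μ P) (hXZ : IndepFun X Z P)
    (hg : Measurable (Function.uncurry g)) (hgν : ∀ᵐ x ∂ρ, μ.map (g x) = ν) :
    HasLaw (fun ω => g (X ω) (Z ω)) ν P ∧ IndepFun X (fun ω => g (X ω) (Z ω)) P := by
  have : IsProbabilityMeasure ρ := hX.isProbabilityMeasure_iff.1 ‹_›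
  have : IsProbabilityMeasure μ := hZ.isProbabilityMeasure_iff.1 ‹_›
  have : SFinite ν := by
    obtain ⟨x, hx⟩ := hgν.exists
    rw [← hx]
    infer_instance
  have skew : MeasurePreserving (fun p : S × R => (p.1, g p.1 p.2)) (ρ.prod μ) (ρ.prod ν) :=
    (MeasurePreserving.id ρ).skew_product hg hgν
  have joint : HasLaw (fun ω => (X ω, g (X ω) (Z ω))) (ρ.prod ν) P :=
    skew.fun_comp_hasLaw (hXZ.hasLaw_prod hX hZ)
  have lawY : HasLaw (fun ω => g (X ω) (Z ω)) ν P := measurePreserving_snd.fun_comp_hasLaw joint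
  exact ⟨lawY, (indepFun_iff_hasLaw_prodMk_prod hX lawY).2 joint⟩

theorem hasLaw_uniform_and_indepFun_add_of_surjective {G H : Type*} [AddGroup G] [Fintype G]
    [MeasurableSpace G] [DiscreteMeasurableSpace G] [AddGroup H] [Fintype H] [MeasurableSpace H]
    [MeasurableAdd₂ H] {Z : Ω → G} {L : G →+ H} {w : S → H} (hX : AEMeasurable X P)
    (hZ : HasLaw Z (PMF.uniformOfFintype G).toMeasure P) (hXZ : IndepFun X Z P)
    (hL : Function.Surjective L) (hw : Measurable w) :
    HasLaw (fun ω => w (X ω) + L (Z ω)) (PMF.uniformOfFintype H).toMeasure P ∧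
      IndepFun X (fun ω => w (X ω) + L (Z ω)) P := by
  have : IsProbabilityMeasure P := hZ.isProbabilityMeasure
  have hLm : Measurable L := .of_discrete
  refine hasLaw_and_indepFun_of_ae_map_eq (g := fun x z => w x + L z) ⟨hX, rfl⟩ hZ hXZ
    (by fun_prop) (ae_of_all _ fun x => ?_)
  rw [PMF.toMeasure_map (f := fun z => w x + L z) _ (by fun_prop),
    uniformOfFintype_map_const_add_of_surjective hL]

end Masking

section NoiseMatrix

/-- The matrix through which `t` noise symbols enter the answers: row `j` is `(β_j, …, β_j ^ t)`.
Columns are indexed from `0`, so the paper's exponent `i` is the column index plus one. -/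
def noiseMatrix {F ι : Type*} [Monoid F] (β : ι → F) (t : ℕ) : Matrix ι (Fin t) F :=
  Matrix.of fun j i => β j ^ ((i : ℕ) + 1)

variable {F κ : Type*} [Field F] [Fintype κ] {β : κ → F} {t : ℕ}

theorem mulVec_rectVandermonde_one_surjective (hβ : Function.Injective β)
    (ht : Fintype.card κ ≤ t) :
    Function.Surjective (Matrix.rectVandermonde β 1 t).mulVec := by
  classical
  intro y
  set p := Lagrange.interpolate Finset.univ β y
  have hp : p ∈ Polynomial.degreeLT F t := Polynomial.mem_degreeLT.2 <|
    (Lagrange.degree_interpolate_lt y hβ.injOn).trans_le (Nat.cast_le.2 ht)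
  refine ⟨Polynomial.degreeLTEquiv F t ⟨p, hp⟩, funext fun j => ?_⟩
  calc (Matrix.rectVandermonde β 1 t).mulVec (Polynomial.degreeLTEquiv F t ⟨p, hp⟩) j
      = p.eval (β j) := by
        simp only [Matrix.mulVec, dotProduct, Matrix.rectVandermonde_apply, Pi.one_apply, one_pow,
          mul_one, Polynomial.eval_eq_sum_degreeLTEquiv hp, mul_comm]
    _ = y j := Lagrange.eval_interpolate_at_node y hβ.injOn (Finset.mem_univ j)

theorem mulVec_noiseMatrix_surjective (hβ : Function.Injective β) (hβ0 : ∀ j, β j ≠ 0)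
    (ht : Fintype.card κ ≤ t) : Function.Surjective (noiseMatrix β t).mulVec := by
  intro y
  obtain ⟨z, hz⟩ := mulVec_rectVandermonde_one_surjective hβ ht fun j => (β j)⁻¹ * y j
  refine ⟨z, funext fun j => ?_⟩
  calc (noiseMatrix β t).mulVec z j
      = β j * (Matrix.rectVandermonde β 1 t).mulVec z j := by
        simp only [noiseMatrix, Matrix.mulVec, dotProduct, Matrix.of_apply,
          Matrix.rectVandermonde_apply, Pi.one_apply, one_pow, mul_one, Finset.mul_sum, pow_succ',
          mul_assoc]
    _ = y j := by rw [hz, mul_inv_cancel_left₀ (hβ0 j)]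

end NoiseMatrix

-- `X` stands for the parties' data and the query; `v X` is the vector of noise-free answers.
theorem stmt14_general {F : Type*} [Field F] [Fintype F] [MeasurableSpace F]
    [DiscreteMeasurableSpace F] {Ω S ι : Type*} [MeasurableSpace Ω] [MeasurableSpace S]
    [DecidableEq ι] {P : Measure Ω} {t : ℕ} {β : ι → F} {X : Ω → S} {v : S → ι → F}
    {Z : Ω → (Fin t → F)}
    (hX : AEMeasurable X P) (hv : Measurable v)
    (hZ : HasLaw Z (PMF.uniformOfFintype (Fin t → F)).toMeasure P) (hXZ : IndepFun X Z P)
    {s : Finset ι} (hβ : Set.InjOn β s) (hβ0 : ∀ j ∈ s, β j ≠ 0) (hs : s.card ≤ t) :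
    HasLaw (fun ω => fun j : s => v (X ω) j + ∑ i : Fin t, β j ^ ((i : ℕ) + 1) * Z ω i)
        (PMF.uniformOfFintype (s → F)).toMeasure P ∧
      IndepFun X
        (fun ω => fun j : s => v (X ω) j + ∑ i : Fin t, β j ^ ((i : ℕ) + 1) * Z ω i) P := by
  have mask_surjective : Function.Surjective (noiseMatrix (fun j : s => β j) t).mulVec :=
    mulVec_noiseMatrix_surjective hβ.injective (fun j => hβ0 j j.2) (by rwa [Fintype.card_coe])
  exact hasLaw_uniform_and_indepFun_add_of_surjective (w := fun x (j : s) => v x j)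
    (L := (noiseMatrix (fun j : s => β j) t).mulVecLin.toAddMonoidHom)
    hX hZ hXZ mask_surjective (by fun_prop)

/-- Eavesdropper security for the SPMA type II scheme: with uniform shared randomness
`Z'_1, …, Z'_{n-1}` independent of the noise-free answers `V`, any at most `n - 1` of the
masked answers `A_j = V_j + ∑_{i=1}^{n-1} β_j^i Z'_i` are jointly uniform and independent
of `V`. -/
theorem stmt14 {F : Type*} [Field F] [Fintype F] [MeasurableSpace F] [DiscreteMeasurableSpace F]
    {Ω : Type*} [MeasurableSpace Ω] (Pr : Measure Ω) [IsProbabilityMeasure Pr]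
    (n : ℕ) (hn : 2 ≤ n) (β : Fin n → F) (hβ : Function.Injective β) (hβ0 : ∀ j, β j ≠ 0)
    (V : Ω → (Fin n → F)) (Z' : Ω → (Fin (n - 1) → F))
    (hVm : Measurable V) (hZm : Measurable Z')
    (hZ : Measure.map Z' Pr = (PMF.uniformOfFintype (Fin (n - 1) → F)).toMeasure)
    (hindep : IndepFun V Z' Pr) :
    ∀ 𝒴 : Finset (Fin n), 𝒴.card ≤ n - 1 →
      Measure.map
          (fun ω => fun j : 𝒴 =>
            V ω j + ∑ i : Fin (n - 1), β (j : Fin n) ^ ((i : ℕ) + 1) * Z' ω i) Pr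
        = (PMF.uniformOfFintype (𝒴 → F)).toMeasure ∧
      IndepFun V
        (fun ω => fun j : 𝒴 =>
          V ω j + ∑ i : Fin (n - 1), β (j : Fin n) ^ ((i : ℕ) + 1) * Z' ω i) Pr := fun _ h𝒴 =>
  (stmt14_general hVm.aemeasurable measurable_id ⟨hZm.aemeasurable, hZ⟩ hindep hβ.injOn
    (fun j _ => hβ0 j) h𝒴).imp HasLaw.map_eq id
end
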